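/- Let p ∈ [1,∞), let d ≥ 1 be an integer, let Λ ⊂ ℝ^d be σ-compact, and let (w(x))_x be a continuous family of bounded positive weight sequences such that the map (λ, v) ↦ T_λ(v) is continuous from Λ × ℓp(ℕ)^d to ℓp(ℕ)^d, where T_λ = B_{w(λ₁)} × ⋯ × B_{w(λ_d)}. For λ ∈ Λ and an integer m ≥ 1, let S_{λ,m} act on finitely supported elements of ℓp(ℕ)^d componentwise as the weighted forward shift F_{w(λ_i)^{−1/m}}, where (F_{w(x)^{−1/m}} y)(0) = 0 and (F_{w(x)^{−1/m}} y)(n) = w_n(x)^{−1/m}·y(n−1) for n ≥ 1. Assume that for every compact K ⊂ Λ, all integers 1 ≤ m' ≤ m'', every finitely supported u ∈ ℓp(ℕ)^d, every N > 0 and every ε > 0, there exist an integer q ≥ 0, parameters λ_0, …, λ_q ∈ Λ, subsets Λ_0, …, Λ_q ⊆ Λ and integers n_0 < n_1 < ⋯ < n_q with n_0 > N and n_{i+1} − n_i > N, such that (all powers of elements of ℓp(ℕ)^d being taken coordinatewise in each component): (I) ∪_{i=0}^q Λ_i ⊇ K; (II) for all i, all λ ∈ Λ_i and all integers m with m' ≤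 m ≤ m'', ‖Σ_{j=0}^q S_{λ_j,m'}^{n_j}(u)‖ ≤ ε and ‖Σ_{j≠i} T_λ^{n_i}((S_{λ_j,m'}^{n_j}(u))^m)‖ ≤ ε; (III) for all i, all λ ∈ Λ_i and all integers m with m' < m ≤ m'', ‖T_λ^{n_i}((S_{λ_i,m'}^{n_i}(u))^m)‖ ≤ ε; (IV) for all i and all λ ∈ Λ_i, ‖T_λ^{n_i}((S_{λ_i,m'}^{n_i}(u))^{m'}) − u^{m'}‖ ≤ ε. Then there exists a non-unital subalgebra A ≠ {0} of ℓp(ℕ)^d (for the componentwise coordinatewise product) such that every nonzero element of A is hypercyclic for every T_λ, λ ∈ Λ. -/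

import Mathlib

open scoped ENNReal
open Finset

noncomputable section

/-- The space `ℓᵖ(ℕ)` of `p`-summable complex sequences. -/
abbrev lpC (p : ℝ≥0∞) : Type := lp (fun _ : ℕ => ℂ) p

/-- `T` is the product operator `B_{w(lam 0)} × ⋯ × B_{w(lam (d-1))}` of weighted backward
shifts, the weight sequence of the `i`-th factor being `(w (lam i) n)_{n ≥ 1}`. -/
def IsProductShift (p : ℝ≥0∞) [Fact (1 ≤ p)] (d : ℕ) (w : ℝ → ℕ → ℝ)
    (T : (Fin d → lpC p) →L[ℂ] (Fin d → lpC p)) (lam : Fin d → ℝ) : Prop :=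
  ∀ (v : Fin d → lpC p) (i : Fin d) (n : ℕ),
    (T v) i n = (w (lam i) (n + 1) : ℂ) * v i (n + 1)

/-- The family `T lam`, `lam ∈ S`, admits a common hypercyclic algebra for the coordinatewise
product: there is a non-unital subalgebra `A ≠ {0}` of `(ℓᵖ(ℕ))^d` (closed under addition,
scalar multiplication and the componentwise coordinatewise product) every nonzero element of
which is a common hypercyclic vector for the family. -/
def CommonHypercyclicAlgebraCW (p : ℝ≥0∞) [Fact (1 ≤ p)] (d : ℕ) (S : Set (Fin d → ℝ))
    (T : (Fin d → ℝ) → ((Fin d → lpC p) →L[ℂ] (Fin d → lpC p))) : Prop :=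
  ∃ A : Set (Fin d → lpC p),
    (0 : Fin d → lpC p) ∈ A ∧
    (∀ x ∈ A, ∀ y ∈ A, x + y ∈ A) ∧
    (∀ (c : ℂ), ∀ x ∈ A, c • x ∈ A) ∧
    (∀ x ∈ A, ∀ y ∈ A, ∃ z ∈ A, ∀ (i : Fin d) (n : ℕ), z i n = x i n * y i n) ∧
    (∃ x ∈ A, x ≠ 0) ∧
    (∀ x ∈ A, x ≠ 0 → ∀ lam ∈ S, Dense (Set.range fun n : ℕ => ((T lam) ^ (n + 1)) x))

/-- The raw weighted backward shift on sequences: `(B_w f) n = w (n+1) * f (n+1)`. -/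
def bshift (ww : ℕ → ℝ) (f : ℕ → ℂ) : ℕ → ℂ := fun n => (ww (n + 1) : ℂ) * f (n + 1)

/-- The raw weighted forward shift with weights `w n ^ (-1/m)`:
`(F f) 0 = 0` and `(F f) n = w n ^ (-1/m) * f (n-1)` for `n ≥ 1`. -/
def fshift (ww : ℕ → ℝ) (m : ℕ) (f : ℕ → ℂ) : ℕ → ℂ := fun n =>
  if n = 0 then 0 else ((ww n ^ (-(1 : ℝ) / (m : ℝ)) : ℝ) : ℂ) * f (n - 1)

/-- The (Pi sup-norm) of the element of `(ℓᵖ)^d` with coordinates `f` is at most `ε`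
(in particular `f i` is a `p`-summable sequence for each `i`). -/
def NormLE (p : ℝ≥0∞) [Fact (1 ≤ p)] (d : ℕ) (f : Fin d → ℕ → ℂ) (ε : ℝ) : Prop :=
  ∃ z : Fin d → lpC p, (∀ (i : Fin d) (n : ℕ), z i n = f i n) ∧ ‖z‖ ≤ ε

namespace CHA

theorem lp_mul_mem {p : ℝ≥0∞} [Fact (1 ≤ p)] (x y : lpC p) :
    Memℓp (fun n : ℕ => x n * y n) p := by
  have h : Memℓp (fun n : ℕ => ((‖x‖ : ℂ) • y) n) p := lp.memℓp _
  refine h.mono' (fun n => ?_)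
  have h1 : ‖x n‖ ≤ ‖x‖ := lp.norm_apply_le_norm (zero_lt_one.trans_le Fact.out).ne' x n
  simp only [norm_mul, lp.coeFn_smul, Pi.smul_apply, smul_eq_mul, Complex.norm_real, norm_norm]
  gcongr

def mulLM (p : ℝ≥0∞) [Fact (1 ≤ p)] : lpC p →ₗ[ℂ] lpC p →ₗ[ℂ] lpC p :=
  LinearMap.mk₂ ℂ (fun x y => (⟨fun n : ℕ => x n * y n, lp_mul_mem x y⟩ : lpC p))
    (fun x x' y => by ext n; simp [add_mul]; rfl)
    (fun c x y => by ext n; simp [mul_assoc])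
    (fun x y y' => by ext n; simp [mul_add]; rfl)
    (fun c x y => by ext n; simp [mul_left_comm])

theorem mulLM_apply {p : ℝ≥0∞} [Fact (1 ≤ p)] (x y : lpC p) (n : ℕ) :
    mulLM p x y n = x n * y n := rfl

theorem mulLM_norm {p : ℝ≥0∞} [Fact (1 ≤ p)] (x y : lpC p) :
    ‖mulLM p x y‖ ≤ 1 * ‖x‖ * ‖y‖ := by
  have hp0 : p ≠ 0 := (zero_lt_one.trans_le Fact.out).ne'
  have h : ‖mulLM p x y‖ ≤ ‖((‖x‖ : ℂ) • y)‖ := by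
    refine lp.norm_mono hp0 (fun n => ?_)
    have h1 : ‖x n‖ ≤ ‖x‖ := lp.norm_apply_le_norm hp0 x n
    simp only [mulLM_apply, norm_mul, lp.coeFn_smul, Pi.smul_apply, smul_eq_mul,
      Complex.norm_real, norm_norm]
    gcongr
  rw [norm_smul] at h
  simpa using h

def mulL (p : ℝ≥0∞) [Fact (1 ≤ p)] : lpC p →L[ℂ] lpC p →L[ℂ] lpC p :=
  LinearMap.mkContinuous₂ (mulLM p) 1 mulLM_norm

theorem mulL_apply {p : ℝ≥0∞} [Fact (1 ≤ p)] (x y : lpC p) (n : ℕ) :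
    mulL p x y n = x n * y n := rfl

/-- Coordinatewise powers (with the value `0` for exponent `0`). -/
def pw {p : ℝ≥0∞} [Fact (1 ≤ p)] {d : ℕ} (x : Fin d → lpC p) : ℕ → (Fin d → lpC p)
  | 0 => 0
  | 1 => x
  | (m + 2) => fun i => mulL p (x i) (pw x (m + 1) i)

theorem pw_apply {p : ℝ≥0∞} [Fact (1 ≤ p)] {d : ℕ} (x : Fin d → lpC p) (m : ℕ) (i : Fin d)
    (n : ℕ) : pw x (m + 1) i n = (x i n) ^ (m + 1) := by
  induction m with
  | zero => simp [pw]
  | succ m ih => rw [pw, mulL_apply, ih]; ring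

theorem pw_apply' {p : ℝ≥0∞} [Fact (1 ≤ p)] {d : ℕ} (x : Fin d → lpC p) {m : ℕ} (hm : 1 ≤ m)
    (i : Fin d) (n : ℕ) : pw x m i n = (x i n) ^ m := by
  obtain ⟨k, rfl⟩ : ∃ k, m = k + 1 := ⟨m - 1, by omega⟩
  exact pw_apply x k i n

theorem pw_continuous {p : ℝ≥0∞} [Fact (1 ≤ p)] {d : ℕ} (m : ℕ) :
    Continuous (fun x : Fin d → lpC p => pw x m) := by
  induction m with
  | zero => exact continuous_const
  | succ m ih =>
    rcases m with _ | m
    · exact continuous_id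
    · refine continuous_pi (fun i => ?_)
      have h1 : Continuous (fun x : Fin d → lpC p => pw x (m + 1) i) :=
        (continuous_apply i).comp ih
      have h2 : Continuous (fun x : Fin d → lpC p => mulL p (x i)) :=
        (mulL p).continuous.comp (continuous_apply i)
      exact h2.clm_apply h1

/-- Finitely supported vectors are dense. -/
theorem exists_fin_supp {p : ℝ≥0∞} [Fact (1 ≤ p)] (hp : p ≠ ⊤) {d : ℕ} (x : Fin d → lpC p)
    {ε : ℝ} (hε : 0 < ε) :
    ∃ s : Finset ℕ, dist (fun i => ∑ n ∈ s, lp.single p n (x i n) : Fin d → lpC p) x < ε := by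
  have h : Filter.Tendsto (fun s : Finset ℕ =>
      (fun i => ∑ n ∈ s, lp.single p n (x i n) : Fin d → lpC p)) Filter.atTop (nhds x) :=
    tendsto_pi_nhds.2 (fun i => lp.hasSum_single hp (x i))
  exact (h.eventually (Metric.ball_mem_nhds x hε)).exists

theorem sum_single_apply {p : ℝ≥0∞} [Fact (1 ≤ p)] (s : Finset ℕ) (f : ℕ → ℂ) (k : ℕ) :
    (∑ n ∈ s, lp.single p n (f n) : lpC p) k = if k ∈ s then f k else 0 := by
  rw [lp.coeFn_sum, Finset.sum_apply]
  simp only [lp.single_apply, Pi.single_apply]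
  simp

theorem exists_fin_supp' {p : ℝ≥0∞} [Fact (1 ≤ p)] (hp : p ≠ ⊤) {d : ℕ} (x : Fin d → lpC p)
    {ε : ℝ} (hε : 0 < ε) :
    ∃ (y : Fin d → lpC p) (P : ℕ), (∀ i n, P < n → y i n = 0) ∧ dist y x < ε := by
  obtain ⟨s, hs⟩ := exists_fin_supp hp x hε
  refine ⟨_, s.sup id, fun i n hn => ?_, hs⟩
  simp only [sum_single_apply]
  rw [if_neg]
  intro h
  have := Finset.le_sup (f := id) h
  simp at this
  omega

theorem separable {p : ℝ≥0∞} [Fact (1 ≤ p)] (hp : p ≠ ⊤) (d : ℕ) :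
    TopologicalSpace.SeparableSpace (Fin d → lpC p) := by
  have : TopologicalSpace.SeparableSpace (lpC p) := by
    rw [← TopologicalSpace.isSeparable_univ_iff]
    have h := ((Set.countable_range
      (fun n : ℕ => (lp.single p n (1 : ℂ) : lpC p))).isSeparable.span (R := ℂ)).closure
    refine h.mono (fun x _ => ?_)
    refine mem_closure_of_tendsto (lp.hasSum_single hp x) (Filter.Eventually.of_forall ?_)
    intro s
    refine Submodule.sum_mem _ (fun n _ => ?_)
    have : (lp.single p n (x n) : lpC p) = (x n) • lp.single p n (1 : ℂ) := by
      rw [← lp.single_smul]; simp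
    rw [this]
    exact Submodule.smul_mem _ _ (Submodule.subset_span ⟨n, rfl⟩)
  infer_instance

/-! shifts -/

theorem bshift_iter (ww : ℕ → ℝ) (n : ℕ) : ∃ W : ℕ → ℂ, ∀ (f : ℕ → ℂ) (k : ℕ),
    (bshift ww)^[n] f k = W k * f (k + n) := by
  induction n with
  | zero => exact ⟨fun _ => 1, fun f k => by simp⟩
  | succ n ih =>
    obtain ⟨W, hW⟩ := ih
    refine ⟨fun k => W k * (ww (k + n + 1) : ℂ), fun f k => ?_⟩
    rw [Function.iterate_succ_apply, hW, bshift]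
    simp [mul_assoc, add_assoc]

theorem fshift_supp (ww : ℕ → ℝ) (m : ℕ) (f : ℕ → ℂ) (P : ℕ) (hf : ∀ n, P < n → f n = 0)
    (N : ℕ) : ∀ t, (t < N ∨ N + P < t) → (fshift ww m)^[N] f t = 0 := by
  induction N with
  | zero => intro t ht; exact hf t (by omega)
  | succ N ih =>
    intro t ht
    rw [Function.iterate_succ_apply', fshift]
    split_ifs with h
    · rfl
    · rw [ih (t - 1) (by omega), mul_zero]

theorem T_pow_apply {p : ℝ≥0∞} [Fact (1 ≤ p)] {d : ℕ} {w : ℝ → ℕ → ℝ}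
    {T : (Fin d → lpC p) →L[ℂ] (Fin d → lpC p)} {lam : Fin d → ℝ}
    (hT : IsProductShift p d w T lam) (n : ℕ) : ∀ (v : Fin d → lpC p) (i : Fin d) (k : ℕ),
    (T ^ n) v i k = (bshift (w (lam i)))^[n] (fun t => v i t) k := by
  induction n with
  | zero => intro v i k; simp
  | succ n ih =>
    intro v i k
    rw [pow_succ, mul_apply_eq_comp, ih, Function.iterate_succ_apply]
    have h : (fun t => (T v) i t) = bshift (w (lam i)) (fun t => v i t) := by
      funext t
      exact hT v i t
    rw [h]

/-- The normalized polynomial `x^{m'} + Σ a_m x^m`. -/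
def Q {p : ℝ≥0∞} [Fact (1 ≤ p)] {d : ℕ} (m' m'' : ℕ) (a : ℕ → ℂ) (x : Fin d → lpC p) :
    Fin d → lpC p :=
  pw x m' + ∑ m ∈ Finset.Ioc m' m'', a m • pw x m

theorem Q_continuous {p : ℝ≥0∞} [Fact (1 ≤ p)] {d : ℕ} (m' m'' : ℕ) :
    Continuous (fun q : (ℕ → ℂ) × (Fin d → lpC p) => Q m' m'' q.1 q.2) := by
  unfold Q
  refine ((pw_continuous m').comp continuous_snd).add ?_
  refine continuous_finsetSum _ (fun m _ => ?_)
  exact ((continuous_apply m).comp continuous_fst).smul ((pw_continuous m).comp continuous_snd)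

theorem Q_apply {p : ℝ≥0∞} [Fact (1 ≤ p)] {d : ℕ} {m' : ℕ} (hm : 1 ≤ m') (m'' : ℕ) (a : ℕ → ℂ)
    (x : Fin d → lpC p) (i : Fin d) (n : ℕ) :
    Q m' m'' a x i n = (x i n) ^ m' + ∑ m ∈ Finset.Ioc m' m'', a m * (x i n) ^ m := by
  simp only [Q, Pi.add_apply, lp.coeFn_add, Finset.sum_apply, lp.coeFn_sum, Pi.smul_apply,
    lp.coeFn_smul, smul_eq_mul]
  rw [pw_apply' x hm]
  congr 1
  refine Finset.sum_congr rfl (fun m hmm => ?_)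
  rw [pw_apply' x (by have := Finset.mem_Ioc.1 hmm; omega)]

def E {p : ℝ≥0∞} [Fact (1 ≤ p)] {d : ℕ}
    (T : (Fin d → ℝ) → ((Fin d → lpC p) →L[ℂ] (Fin d → lpC p)))
    (K : Set (Fin d → ℝ)) (m' m'' s : ℕ) (v : Fin d → lpC p) (ε : ℝ) : Set (Fin d → lpC p) :=
  {x | ∀ lam ∈ K, ∀ a : ℕ → ℂ, (∀ m, ‖a m‖ ≤ s) →
    ∃ n : ℕ, dist (((T lam) ^ (n + 1)) (Q m' m'' a x)) v < ε}

theorem T_pow_continuous {p : ℝ≥0∞} [Fact (1 ≤ p)] {d : ℕ}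
    {T : (Fin d → ℝ) → ((Fin d → lpC p) →L[ℂ] (Fin d → lpC p))}
    {K : Set (Fin d → ℝ)}
    (hTcont : ContinuousOn (fun q : (Fin d → ℝ) × (Fin d → lpC p) => T q.1 q.2)
      (K ×ˢ Set.univ)) (n : ℕ) :
    Continuous (fun q : K × (Fin d → lpC p) => ((T q.1) ^ n) q.2) := by
  induction n with
  | zero => simpa using continuous_snd
  | succ n ih =>
    have h1 : Continuous (fun q : K × (Fin d → lpC p) => T q.1 q.2) :=
      hTcont.comp_continuous (f := fun q : K × (Fin d → lpC p) => ((q.1 : Fin d → ℝ), q.2))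
        (by fun_prop) (fun q => ⟨q.1.2, trivial⟩)
    have h2 := ih.comp (continuous_fst.prodMk h1)
    refine h2.congr (fun q => ?_)
    simp [pow_succ]

theorem E_open {p : ℝ≥0∞} [Fact (1 ≤ p)] {d : ℕ}
    {T : (Fin d → ℝ) → ((Fin d → lpC p) →L[ℂ] (Fin d → lpC p))}
    {K : Set (Fin d → ℝ)} (hK : IsCompact K)
    (hTcont : ContinuousOn (fun q : (Fin d → ℝ) × (Fin d → lpC p) => T q.1 q.2)
      (K ×ˢ Set.univ)) (m' m'' s : ℕ) (v : Fin d → lpC p) (ε : ℝ) :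
    IsOpen (E T K m' m'' s v ε) := by
  have : CompactSpace K := isCompact_iff_compactSpace.1 hK
  have hB : IsCompact (Set.pi Set.univ (fun _ : ℕ => Metric.closedBall (0 : ℂ) s)) :=
    isCompact_univ_pi (fun _ => isCompact_closedBall _ _)
  have hC : IsCompact ((Set.univ : Set K) ×ˢ
    (Set.pi Set.univ (fun _ : ℕ => Metric.closedBall (0 : ℂ) s))) := isCompact_univ.prod hB
  rw [isOpen_iff_eventually]
  intro x hx
  have key := hC.eventually_forall_of_forall_eventually (x₀ := x)
    (P := fun x c => ∃ n : ℕ, dist (((T c.1) ^ (n + 1)) (Q m' m'' c.2 x)) v < ε) ?_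
  · filter_upwards [key] with y hy lam hlam a ha
    exact hy (⟨lam, hlam⟩, a) ⟨trivial, fun m _ => by simpa using ha m⟩
  · rintro ⟨lam, a⟩ ⟨_, ha⟩
    obtain ⟨n, hn⟩ := hx lam lam.2 a (fun m => by simpa using ha m trivial)
    have hc : Continuous (fun z : (Fin d → lpC p) × (K × (ℕ → ℂ)) =>
        dist (((T z.2.1) ^ (n + 1)) (Q m' m'' z.2.2 z.1)) v) := by
      refine Continuous.dist ?_ continuous_const
      have h1 : Continuous (fun z : (Fin d → lpC p) × (K × (ℕ → ℂ)) =>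
          Q m' m'' z.2.2 z.1) :=
        (Q_continuous m' m'').comp
          ((continuous_snd.comp continuous_snd).prodMk continuous_fst)
      exact (T_pow_continuous hTcont (n + 1)).comp
        ((continuous_fst.comp continuous_snd).prodMk h1)
    have := (isOpen_lt hc continuous_const).mem_nhds (x := (x, (lam, a))) hn
    exact Filter.mem_of_superset this (fun z hz => ⟨n, hz⟩)

theorem sum_pow_disj {q : ℕ} (g : ℕ → ℂ)
    (h : ∀ j ∈ Finset.range (q + 1), ∀ k ∈ Finset.range (q + 1), j ≠ k → g j = 0 ∨ g k = 0)
    {m : ℕ} (hm : 1 ≤ m) :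
    (∑ j ∈ Finset.range (q + 1), g j) ^ m = ∑ j ∈ Finset.range (q + 1), (g j) ^ m := by
  by_cases h0 : ∀ j ∈ Finset.range (q + 1), g j = 0
  · rw [Finset.sum_eq_zero h0, Finset.sum_eq_zero (fun j hj => by
      rw [h0 j hj, zero_pow (by omega)]), zero_pow (by omega)]
  · push Not at h0
    obtain ⟨j, hj, hj0⟩ := h0
    have h1 : ∀ k ∈ Finset.range (q + 1), k ≠ j → g k = 0 := fun k hk hkj =>
      (h j hj k hk (Ne.symm hkj)).resolve_left hj0
    rw [Finset.sum_eq_single_of_mem j hj h1, Finset.sum_eq_single_of_mem j hj (fun k hk hkj => by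
      rw [h1 k hk hkj, zero_pow (by omega)])]

theorem gap {q N : ℕ} {nseq : ℕ → ℕ} (h : ∀ j < q, nseq j + N < nseq (j + 1)) :
    ∀ k ≤ q, ∀ j < k, nseq j + N < nseq k := by
  intro k
  induction k with
  | zero => intro _ j hj; omega
  | succ k ih =>
    intro hk j hj
    rcases Nat.lt_or_ge j k with h1 | h1
    · have := ih (by omega) j h1
      have := h k (by omega)
      omega
    · obtain rfl : j = k := by omega
      exact h j (by omega)

def Crit (p : ℝ≥0∞) [Fact (1 ≤ p)] (d : ℕ) (Λ : Set (Fin d → ℝ)) (w : ℝ → ℕ → ℝ)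
    (K : Set (Fin d → ℝ)) (m' m'' : ℕ) (u : Fin d → ℕ → ℂ) (N : ℕ) (ε : ℝ) : Prop :=
      ∃ q : ℕ, ∃ lamj : ℕ → (Fin d → ℝ), ∃ Lamj : ℕ → Set (Fin d → ℝ), ∃ nseq : ℕ → ℕ,
        (∀ j ≤ q, lamj j ∈ Λ) ∧ (∀ j ≤ q, Lamj j ⊆ Λ) ∧
        (N < nseq 0) ∧ (∀ j < q, nseq j + N < nseq (j + 1)) ∧
        (K ⊆ ⋃ j ∈ Finset.range (q + 1), Lamj j) ∧
        NormLE p d (fun i n => ∑ j ∈ Finset.range (q + 1),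
          (fshift (w (lamj j i)) m')^[nseq j] (u i) n) ε ∧
        (∀ i ≤ q, ∀ lam ∈ Lamj i, ∀ m : ℕ, m' ≤ m → m ≤ m'' →
          NormLE p d (fun c n => ∑ j ∈ (Finset.range (q + 1)).erase i,
            (bshift (w (lam c)))^[nseq i]
              (fun t => ((fshift (w (lamj j c)) m')^[nseq j] (u c) t) ^ m) n) ε) ∧
        (∀ i ≤ q, ∀ lam ∈ Lamj i, ∀ m : ℕ, m' < m → m ≤ m'' →
          NormLE p d (fun c n => (bshift (w (lam c)))^[nseq i]
            (fun t => ((fshift (w (lamj i c)) m')^[nseq i] (u c) t) ^ m) n) ε) ∧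
        (∀ i ≤ q, ∀ lam ∈ Lamj i,
          NormLE p d (fun c n => (bshift (w (lam c)))^[nseq i]
            (fun t => ((fshift (w (lamj i c)) m')^[nseq i] (u c) t) ^ m') n
              - (u c n) ^ m') ε)

theorem E_dense {p : ℝ≥0∞} [Fact (1 ≤ p)] (hp : p ≠ ⊤) {d : ℕ}
    {Λ : Set (Fin d → ℝ)} {w : ℝ → ℕ → ℝ}
    {T : (Fin d → ℝ) → ((Fin d → lpC p) →L[ℂ] (Fin d → lpC p))}
    (hT : ∀ lam ∈ Λ, IsProductShift p d w (T lam) lam)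
    {K : Set (Fin d → ℝ)} (hKΛ : K ⊆ Λ) {m' m'' : ℕ} (hm1 : 1 ≤ m') (hm2 : m' ≤ m'')
    (hcrit : ∀ u : Fin d → ℕ → ℂ, (∃ P : ℕ, ∀ (i : Fin d) (n : ℕ), P < n → u i n = 0) →
      ∀ N : ℕ, 0 < N → ∀ ε > (0 : ℝ), Crit p d Λ w K m' m'' u N ε)
    (s : ℕ) (v : Fin d → lpC p) {ε : ℝ} (hε : 0 < ε) :
    Dense (E T K m' m'' s v ε) := by
  rw [Metric.dense_iff]
  intro y0 δ hδ
  obtain ⟨x0, P0, hx0, hx0d⟩ := exists_fin_supp' hp y0 (half_pos hδ)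
  obtain ⟨v', P1, hv', hv'd⟩ := exists_fin_supp' hp v (half_pos hε)
  have hroot : ∀ z : ℂ, ∃ r : ℂ, r ^ m' = z := fun z =>
    IsAlgClosed.exists_pow_nat_eq z (by omega)
  choose root hr using hroot
  set u : Fin d → ℕ → ℂ := fun i n => root (v' i n) with hu
  have hu0 : ∀ i n, P1 < n → u i n = 0 := fun i n hn => by
    have := hr (v' i n)
    rw [hv' i n hn] at this
    simp only [hu, hv' i n hn]
    exact pow_eq_zero_iff (by omega) |>.1 this
  set P := max P0 P1 with hP
  -- the tolerance
  set L : ℝ := 2 * (1 + ∑ m ∈ Finset.Ioc m' m'', (s : ℝ)) with hL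
  have hLpos : 0 < L := by positivity
  set η : ℝ := min (δ / 3) (ε / (3 * L)) with hη
  have hηpos : 0 < η := by positivity
  have hη1 : η < δ / 2 := lt_of_le_of_lt (min_le_left _ _) (by linarith)
  have hη2 : L * η < ε / 2 := by
    have h1 : η ≤ ε / (3 * L) := min_le_right _ _
    have h2 : L * η ≤ L * (ε / (3 * L)) := by gcongr
    have h3 : L * (ε / (3 * L)) = ε / 3 := by field_simp
    linarith
  obtain ⟨q, lamj, Lamj, nseq, -, -, hN0, hNgap, hcov, ⟨z, hz, hzn⟩, hII, hIII, hIV⟩ :=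
    hcrit u ⟨P1, hu0⟩ (P + 1) (by omega) η hηpos
  have hgap := gap hNgap
  have hnlarge : ∀ j ≤ q, P + 1 < nseq j := by
    intro j hj
    rcases Nat.eq_zero_or_pos j with rfl | h
    · exact hN0
    · have := hgap j hj 0 h
      omega
  refine ⟨x0 + z, ?_, ?_⟩
  · rw [Metric.mem_ball]
    calc dist (x0 + z) y0 ≤ dist (x0 + z) x0 + dist x0 y0 := dist_triangle _ _ _
      _ < δ / 2 + δ / 2 := by
        refine add_lt_add ?_ hx0d
        rw [dist_eq_norm]
        simpa using lt_of_le_of_lt hzn hη1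
      _ = δ := by ring
  intro lam hlam a ha
  have hlam' := hcov hlam
  simp only [Set.mem_iUnion, Finset.mem_range] at hlam'
  obtain ⟨i, hi, hli⟩ := hlam'
  have hi' : i ≤ q := by omega
  refine ⟨nseq i - 1, ?_⟩
  have hni : nseq i - 1 + 1 = nseq i := by have := hnlarge i hi'; omega
  rw [hni]
  -- choose the error vectors
  have hA : ∀ m, ∃ zz : Fin d → lpC p, (m' ≤ m → m ≤ m'' → (∀ c n, zz c n =
      ∑ j ∈ (Finset.range (q + 1)).erase i, (bshift (w (lam c)))^[nseq i]
              (fun t => ((fshift (w (lamj j c)) m')^[nseq j] (u c) t) ^ m) n) ∧ ‖zz‖ ≤ η) := by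
    intro m
    by_cases h : m' ≤ m ∧ m ≤ m''
    · obtain ⟨zz, h1, h2⟩ := hII i hi' lam hli m h.1 h.2
      exact ⟨zz, fun _ _ => ⟨h1, h2⟩⟩
    · exact ⟨0, fun h1 h2 => absurd ⟨h1, h2⟩ h⟩
  have hB : ∀ m, ∃ zz : Fin d → lpC p, (m' < m → m ≤ m'' → (∀ c n, zz c n =
      (bshift (w (lam c)))^[nseq i]
              (fun t => ((fshift (w (lamj i c)) m')^[nseq i] (u c) t) ^ m) n) ∧ ‖zz‖ ≤ η) := by
    intro m
    by_cases h : m' < m ∧ m ≤ m''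
    · obtain ⟨zz, h1, h2⟩ := hIII i hi' lam hli m h.1 h.2
      exact ⟨zz, fun _ _ => ⟨h1, h2⟩⟩
    · exact ⟨0, fun h1 h2 => absurd ⟨h1, h2⟩ h⟩
  choose A hA using hA
  choose B hB using hB
  obtain ⟨C, hC, hCn⟩ := hIV i hi' lam hli
  -- the main identity
  have hmain : (T lam ^ nseq i) (Q m' m'' a (x0 + z)) =
      v' + ((A m' + C) + ∑ m ∈ Finset.Ioc m' m'', a m • (A m + B m)) := by
    funext c
    apply lp.ext
    funext k
    obtain ⟨W, hW⟩ := bshift_iter (w (lam c)) (nseq i)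
    rw [T_pow_apply (hT lam (hKΛ hlam)), hW]
    have hpow : ∀ m, 1 ≤ m → ((x0 + z) c (k + nseq i)) ^ m =
        ∑ j ∈ Finset.range (q + 1),
          ((fshift (w (lamj j c)) m')^[nseq j] (u c) (k + nseq i)) ^ m := by
      intro m hm
      have h1 : (x0 + z) c (k + nseq i) = ∑ j ∈ Finset.range (q + 1),
          ((fshift (w (lamj j c)) m')^[nseq j] (u c) (k + nseq i)) := by
        have h2 : x0 c (k + nseq i) = 0 := hx0 c _ (by
          have := hnlarge i hi'; omega)
        simp only [Pi.add_apply, lp.coeFn_add]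
        rw [h2, zero_add, hz]
      rw [h1]
      refine sum_pow_disj _ ?_ hm
      intro j hj l hl hjl
      have hj' : j ≤ q := by have := Finset.mem_range.1 hj; omega
      have hl' : l ≤ q := by have := Finset.mem_range.1 hl; omega
      have hs : ∀ j, k + nseq i < nseq j ∨ nseq j + P1 < k + nseq i →
          (fshift (w (lamj j c)) m')^[nseq j] (u c) (k + nseq i) = 0 := fun j hj =>
        fshift_supp _ _ _ P1 (hu0 c) _ _ hj
      by_contra hcon
      rw [not_or] at hcon
      have h1 := mt (hs j) hcon.1
      have h2 := mt (hs l) hcon.2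
      rcases lt_or_gt_of_ne hjl with h | h
      · have := hgap l hl' j h
        omega
      · have := hgap j hj' l h
        omega
    have hpow2 : ∀ m, 1 ≤ m → W k * ((x0 + z) c (k + nseq i)) ^ m =
        (∑ j ∈ (Finset.range (q + 1)).erase i, (bshift (w (lam c)))^[nseq i]
              (fun t => ((fshift (w (lamj j c)) m')^[nseq j] (u c) t) ^ m) k) +
        (bshift (w (lam c)))^[nseq i]
              (fun t => ((fshift (w (lamj i c)) m')^[nseq i] (u c) t) ^ m) k := by
      intro m hm
      rw [hpow m hm, ← Finset.sum_erase_add _ _ (Finset.mem_range.2 hi), mul_add, Finset.mul_sum]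
      simp only [hW]
    rw [Q_apply hm1, mul_add, hpow2 m' hm1, Finset.mul_sum]
    simp only [Pi.add_apply, lp.coeFn_add, Finset.sum_apply, lp.coeFn_sum, Pi.smul_apply,
      lp.coeFn_smul, smul_eq_mul]
    rw [(hA m' le_rfl hm2).1, hC]
    have hvu : (u c k) ^ m' = v' c k := hr _
    beta_reduce
    rw [hvu]
    have hsum : ∑ m ∈ Finset.Ioc m' m'', W k * (a m * (x0 + z) c (k + nseq i) ^ m) =
        ∑ m ∈ Finset.Ioc m' m'', a m * (A m c k + B m c k) := by
      refine Finset.sum_congr rfl (fun m hm => ?_)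
      have hm' := Finset.mem_Ioc.1 hm
      rw [mul_left_comm, hpow2 m (by omega), (hA m hm'.1.le hm'.2).1, (hB m hm'.1 hm'.2).1]
    simp only [Pi.add_apply, lp.coeFn_add] at hsum
    rw [hsum]
    ring
  have hAB : ‖(A m' + C) + ∑ m ∈ Finset.Ioc m' m'', a m • (A m + B m)‖ ≤ L * η := by
    have h1 : ‖A m' + C‖ ≤ 2 * η := by
      refine (norm_add_le _ _).trans ?_
      linarith [(hA m' le_rfl hm2).2]
    have h2 : ‖∑ m ∈ Finset.Ioc m' m'', a m • (A m + B m)‖ ≤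
        ∑ m ∈ Finset.Ioc m' m'', (s : ℝ) * (2 * η) := by
      refine (norm_sum_le _ _).trans (Finset.sum_le_sum (fun m hm => ?_))
      have hm' := Finset.mem_Ioc.1 hm
      rw [norm_smul]
      have h3 : ‖A m + B m‖ ≤ 2 * η := by
        refine (norm_add_le _ _).trans ?_
        linarith [(hA m hm'.1.le hm'.2).2, (hB m hm'.1 hm'.2).2]
      exact mul_le_mul (ha m) h3 (norm_nonneg _) (by positivity)
    rw [← Finset.sum_mul] at h2
    refine (norm_add_le _ _).trans ((add_le_add h1 h2).trans (le_of_eq ?_))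
    rw [hL]; ring
  calc dist ((T lam ^ nseq i) (Q m' m'' a (x0 + z))) v
      ≤ dist ((T lam ^ nseq i) (Q m' m'' a (x0 + z))) v' + dist v' v := dist_triangle _ _ _
    _ < ε / 2 + ε / 2 := by
      refine add_lt_add ?_ hv'd
      rw [hmain, dist_eq_norm, add_sub_cancel_left]
      exact lt_of_le_of_lt hAB hη2
    _ = ε := by ring

end CHA

/-- Theorem 2.1 of the paper: the Basic Criterion for common hypercyclic algebras, on
`ℓᵖ(ℕ)^d` with the coordinatewise product. -/
theorem stmt_18 (p : ℝ≥0∞) [Fact (1 ≤ p)] (hp : p ≠ ⊤) (d : ℕ) (hd : 1 ≤ d)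
    (Λ : Set (Fin d → ℝ)) (hΛσ : IsSigmaCompact Λ)
    (w : ℝ → ℕ → ℝ)
    (hwpos : ∀ x : ℝ, ∀ n : ℕ, 1 ≤ n → 0 < w x n)
    (hwbdd : ∀ x : ℝ, ∃ C : ℝ, ∀ n : ℕ, 1 ≤ n → w x n ≤ C)
    (hwcont : ∀ n : ℕ, Continuous fun x => w x n)
    (T : (Fin d → ℝ) → ((Fin d → lpC p) →L[ℂ] (Fin d → lpC p)))
    (hT : ∀ lam ∈ Λ, IsProductShift p d w (T lam) lam)
    (hTcont : ContinuousOn (fun q : (Fin d → ℝ) × (Fin d → lpC p) => T q.1 q.2)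
      (Λ ×ˢ Set.univ))
    (hcrit : ∀ K ⊆ Λ, IsCompact K → ∀ m' m'' : ℕ, 1 ≤ m' → m' ≤ m'' →
      ∀ u : Fin d → ℕ → ℂ, (∃ P : ℕ, ∀ (i : Fin d) (n : ℕ), P < n → u i n = 0) →
      ∀ N : ℕ, 0 < N → ∀ ε > (0 : ℝ),
      ∃ q : ℕ, ∃ lamj : ℕ → (Fin d → ℝ), ∃ Lamj : ℕ → Set (Fin d → ℝ), ∃ nseq : ℕ → ℕ,
        (∀ j ≤ q, lamj j ∈ Λ) ∧ (∀ j ≤ q, Lamj j ⊆ Λ) ∧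
        (N < nseq 0) ∧ (∀ j < q, nseq j + N < nseq (j + 1)) ∧
        -- (I)
        (K ⊆ ⋃ j ∈ Finset.range (q + 1), Lamj j) ∧
        -- (II), first condition
        NormLE p d (fun i n => ∑ j ∈ Finset.range (q + 1),
          (fshift (w (lamj j i)) m')^[nseq j] (u i) n) ε ∧
        -- (II), second condition
        (∀ i ≤ q, ∀ lam ∈ Lamj i, ∀ m : ℕ, m' ≤ m → m ≤ m'' →
          NormLE p d (fun c n => ∑ j ∈ (Finset.range (q + 1)).erase i,
            (bshift (w (lam c)))^[nseq i]
              (fun t => ((fshift (w (lamj j c)) m')^[nseq j] (u c) t) ^ m) n) ε) ∧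
        -- (III)
        (∀ i ≤ q, ∀ lam ∈ Lamj i, ∀ m : ℕ, m' < m → m ≤ m'' →
          NormLE p d (fun c n => (bshift (w (lam c)))^[nseq i]
            (fun t => ((fshift (w (lamj i c)) m')^[nseq i] (u c) t) ^ m) n) ε) ∧
        -- (IV)
        (∀ i ≤ q, ∀ lam ∈ Lamj i,
          NormLE p d (fun c n => (bshift (w (lam c)))^[nseq i]
            (fun t => ((fshift (w (lamj i c)) m')^[nseq i] (u c) t) ^ m') n
              - (u c n) ^ m') ε)) :
    CommonHypercyclicAlgebraCW p d Λ T := by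
  classical
  have hnt : ∃ x : Fin d → lpC p, x ≠ 0 := by
    refine ⟨fun _ => lp.single p 0 (1 : ℂ), fun h => ?_⟩
    have h1 := congrFun h ⟨0, hd⟩
    have h2 : (lp.single p 0 (1 : ℂ) : lpC p) 0 = (0 : lpC p) 0 := by rw [h1]; rfl
    simp at h2
  rcases Set.eq_empty_or_nonempty Λ with hΛe | ⟨lam0, hlam0⟩
  · obtain ⟨x, hx⟩ := hnt
    refine ⟨Set.univ, trivial, fun _ _ _ _ => trivial, fun _ _ _ => trivial, ?_,
      ⟨x, trivial, hx⟩, ?_⟩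
    · intro x _ y _
      exact ⟨fun i => CHA.mulL p (x i) (y i), trivial, fun i n => CHA.mulL_apply _ _ _⟩
    · intro x _ _ lam hlam
      rw [hΛe] at hlam
      exact absurd hlam (Set.notMem_empty _)
  obtain ⟨K, hKc, hKΛ⟩ := hΛσ
  have hKsub : ∀ n, K n ⊆ Λ := fun n => hKΛ ▸ Set.subset_iUnion K n
  have := CHA.separable hp d
  have : Nonempty (Fin d → lpC p) := ⟨0⟩
  let D := TopologicalSpace.denseSeq (Fin d → lpC p)
  have hD : DenseRange D := TopologicalSpace.denseRange_denseSeq _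
  let F : ℕ × ℕ × ℕ × ℕ × ℕ × ℕ → Set (Fin d → lpC p) := fun c =>
    CHA.E T (K c.1) (c.2.1 + 1) (c.2.1 + 1 + c.2.2.1) c.2.2.2.1 (D c.2.2.2.2.1)
      (1 / ((c.2.2.2.2.2 : ℝ) + 1))
  have hF : Dense (⋂ c, F c) := by
    refine dense_iInter_of_isOpen (fun c => ?_) (fun c => ?_)
    · exact CHA.E_open (hKc _) (hTcont.mono (Set.prod_mono (hKsub _) le_rfl)) _ _ _ _ _
    · refine CHA.E_dense hp hT (hKsub _) (by omega) (by omega) ?_ _ _ (by positivity)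
      intro u hu N hN ε hε
      exact hcrit (K c.1) (hKsub _) (hKc _) _ _ (by omega) (by omega) u hu N hN ε hε
  obtain ⟨x, hx⟩ := hF.nonempty
  rw [Set.mem_iInter] at hx
  -- the key property
  have key : ∀ (m' m'' : ℕ), 1 ≤ m' → m' ≤ m'' → ∀ a : ℕ → ℂ, (∃ C : ℝ, ∀ m, ‖a m‖ ≤ C) →
      ∀ lam ∈ Λ, Dense (Set.range fun n : ℕ => ((T lam) ^ (n + 1)) (CHA.Q m' m'' a x)) := by
    intro m' m'' h1 h2 a ⟨C, hC⟩ lam hlam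
    rw [Metric.dense_iff]
    intro y r hr
    rw [← hKΛ] at hlam
    obtain ⟨k, hk⟩ := Set.mem_iUnion.1 hlam
    obtain ⟨s, hs⟩ := exists_nat_ge C
    obtain ⟨l, hl⟩ := exists_nat_one_div_lt (half_pos hr)
    obtain ⟨i, hi⟩ := hD.exists_dist_lt y (half_pos hr)
    obtain ⟨n, hn⟩ := hx (k, m' - 1, m'' - m', s, i, l) lam hk a (fun m => (hC m).trans hs)
    have e1 : m' - 1 + 1 = m' := by omega
    have e2 : m' + (m'' - m') = m'' := by omega
    simp only [e1, e2] at hn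
    refine ⟨_, ?_, ⟨n, rfl⟩⟩
    rw [Metric.mem_ball]
    have := dist_triangle ((T lam ^ (n + 1)) (CHA.Q m' m'' a x)) (D i) y
    rw [dist_comm y] at hi
    linarith
  refine ⟨{z | ∃ f : Polynomial ℂ, f.coeff 0 = 0 ∧ ∀ i n, z i n = f.eval (x i n)}, ?_, ?_, ?_,
    ?_, ?_, ?_⟩
  · exact ⟨0, by simp, fun i n => by simp⟩
  · rintro y ⟨f, hf, hfy⟩ z ⟨g, hg, hgz⟩
    exact ⟨f + g, by simp [hf, hg], fun i n => by simp [hfy, hgz]⟩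
  · rintro c y ⟨f, hf, hfy⟩
    exact ⟨Polynomial.C c * f, by simp [hf], fun i n => by simp [hfy]⟩
  · rintro y ⟨f, hf, hfy⟩ z ⟨g, hg, hgz⟩
    refine ⟨fun i => CHA.mulL p (y i) (z i), ⟨f * g, ?_, fun i n => ?_⟩, fun i n => rfl⟩
    · simp [Polynomial.mul_coeff_zero, hf]
    · rw [CHA.mulL_apply]; simp [hfy, hgz]
  · refine ⟨x, ⟨Polynomial.X, by simp, fun i n => by simp⟩, fun hx0 => ?_⟩
    have h := key 1 1 le_rfl le_rfl 0 ⟨0, by simp⟩ lam0 hlam0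
    have hQ : CHA.Q 1 1 0 x = 0 := by simp [CHA.Q, CHA.pw, hx0]
    simp only [hQ, map_zero] at h
    rw [Set.range_const] at h
    obtain ⟨y, hy⟩ := hnt
    have h3 : y ∈ closure ({0} : Set (Fin d → lpC p)) := h y
    rw [closure_singleton] at h3
    exact hy h3
  · rintro z ⟨f, hf, hfz⟩ hz0 lam hlam
    have hf0 : f ≠ 0 := by
      rintro rfl
      apply hz0
      funext i
      apply lp.ext
      funext n
      rw [hfz]; simp
    set m' := f.natTrailingDegree with hm'
    have hc0 : f.coeff m' ≠ 0 := by
      have := Polynomial.trailingCoeff_nonzero_iff_nonzero.2 hf0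
      exact this
    have h1 : 1 ≤ m' := by
      rcases Nat.eq_zero_or_pos m' with h | h
      · rw [h] at hc0; exact absurd hf hc0
      · exact h
    have h2 : m' ≤ f.natDegree := Polynomial.natTrailingDegree_le_natDegree f
    set a : ℕ → ℂ := fun m => f.coeff m / f.coeff m' with ha
    have hab : ∃ C : ℝ, ∀ m, ‖a m‖ ≤ C := by
      refine ⟨∑ m ∈ Finset.range (f.natDegree + 1), ‖a m‖, fun m => ?_⟩
      by_cases hm : m ∈ Finset.range (f.natDegree + 1)
      · exact Finset.single_le_sum (f := fun m => ‖a m‖) (fun _ _ => norm_nonneg _) hm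
      · have : a m = 0 := by
          simp only [ha]
          rw [Polynomial.coeff_eq_zero_of_natDegree_lt (by simpa using hm), zero_div]
        rw [this, norm_zero]
        exact Finset.sum_nonneg (fun _ _ => norm_nonneg _)
    have hd := key m' f.natDegree h1 h2 a hab lam hlam
    have hzQ : z = f.coeff m' • CHA.Q m' f.natDegree a x := by
      funext i
      apply lp.ext
      funext n
      rw [hfz]
      simp only [Pi.smul_apply, lp.coeFn_smul, smul_eq_mul]
      rw [CHA.Q_apply h1, Polynomial.eval_eq_sum_range, mul_add, Finset.mul_sum]
      have hsub : Finset.Icc m' f.natDegree ⊆ Finset.range (f.natDegree + 1) := by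
        intro m hm
        have := Finset.mem_Icc.1 hm
        exact Finset.mem_range.2 (by omega)
      rw [← Finset.sum_subset hsub, ← Finset.Ioc_insert_left h2, Finset.sum_insert (by simp)]
      · congr 1
        refine Finset.sum_congr rfl (fun m _ => ?_)
        simp only [ha]
        field_simp
      · intro m hm hm2
        rw [Polynomial.coeff_eq_zero_of_lt_natTrailingDegree, zero_mul]
        rw [Finset.mem_range] at hm
        rw [Finset.mem_Icc] at hm2
        omega
    have himg := (Homeomorph.smulOfNeZero (f.coeff m') hc0 :
      (Fin d → lpC p) ≃ₜ (Fin d → lpC p)).surjective.denseRange.dense_image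
        (Homeomorph.continuous _) hd
    rw [← Set.range_comp] at himg
    convert himg using 3 with n
    rw [hzQ]
    simp
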